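/- arXiv:0911.1417 — 2 statements merged into one kernel-verified Lean document; each statement's English description precedes it below -/
import Mathlib

section
/- In the spectral sequence {E_r^{p,q}, d_r} of the filtration K_p = ⊕_{i≥p} Ω^i(M) of (Ω*(M), D): E_3^{p,q} = E_2^{p,q}, and for any class [x_p]_3 ∈ E_3^{p,q} represented by a closed p-form x_p, the third differential is cup product with H_3: d_3[x_p] = [H_3 ∧ x_p]. -/
section TwistedSetup

variable {W : Type} [Ring W] [Algebra ℝ W]

/-- The filtration `K_p = ⊕_{i ≥ p} Ω^i(M)` of the (abstractly modelled) de Rham complex. -/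
def Kfil (A : ℤ → Submodule ℝ W) (p : ℤ) : Submodule ℝ W :=
  ⨆ i : ℤ, ⨆ _ : p ≤ i, A i

/-- The submodule of (sums of) forms of pure parity `m (mod 2)`. -/
def ParPart (A : ℤ → Submodule ℝ W) (m : ℤ) : Submodule ℝ W :=
  ⨆ i : ℤ, ⨆ _ : i % 2 = m % 2, A i

/-- `Z_r^{p,q}`: elements of `K_p` of total parity `p + q` whose differential lies in `K_{p+r}`. -/
def Zcyc (A : ℤ → Submodule ℝ W) (D : W →ₗ[ℝ] W) (r : ℕ) (p q : ℤ) : Submodule ℝ W :=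
  Kfil A p ⊓ ParPart A (p + q) ⊓ (Kfil A (p + r)).comap D

/-- The boundaries `B_r^{p,q} = Z_{r-1}^{p+1,q-1} + D Z_{r-1}^{p-r+1,q+r-2}`. -/
def Bbd (A : ℤ → Submodule ℝ W) (D : W →ₗ[ℝ] W) (r : ℕ) (p q : ℤ) : Submodule ℝ W :=
  Zcyc A D (r - 1) (p + 1) (q - 1) ⊔ (Zcyc A D (r - 1) (p - r + 1) (q + r - 2)).map D

/-- The page `E_r^{p,q}` of the spectral sequence of the filtered complex `(Ω^*(M), D)`. -/
abbrev Epage (A : ℤ → Submodule ℝ W) (D : W →ₗ[ℝ] W) (r : ℕ) (p q : ℤ) : Type :=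
  ↥(Zcyc A D r p q) ⧸ (Bbd A D r p q).comap (Zcyc A D r p q).subtype

/-- The class `[z]_r ∈ E_r^{p,q}` of a cocycle `z ∈ Z_r^{p,q}`. -/
def pageCls (A : ℤ → Submodule ℝ W) (D : W →ₗ[ℝ] W) (r : ℕ) (p q : ℤ)
    (z : W) (hz : z ∈ Zcyc A D r p q) : Epage A D r p q :=
  Submodule.Quotient.mk ⟨z, hz⟩

open Classical in
noncomputable def dpageCore (A : ℤ → Submodule ℝ W) (D : W →ₗ[ℝ] W) (r : ℕ) (p q : ℤ) :
    Epage A D r p q →ₗ[ℝ] Epage A D r (p + r) (q - r + 1) :=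
  if h : (∀ x ∈ Zcyc A D r p q, D x ∈ Zcyc A D r (p + r) (q - r + 1)) ∧
      (∀ x ∈ Zcyc A D r p q, x ∈ Bbd A D r p q → D x ∈ Bbd A D r (p + r) (q - r + 1)) then
    Submodule.liftQ _
      (((Bbd A D r (p + r) (q - r + 1)).comap (Zcyc A D r (p + r) (q - r + 1)).subtype).mkQ.comp
        (LinearMap.codRestrict (Zcyc A D r (p + r) (q - r + 1))
          (D.comp (Zcyc A D r p q).subtype) (fun x => h.1 x x.2)))
      (by
        intro x hx
        simp only [Submodule.mem_comap] at hx
        simp only [LinearMap.mem_ker, LinearMap.comp_apply, Submodule.mkQ_apply,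
          Submodule.Quotient.mk_eq_zero, Submodule.mem_comap, LinearMap.codRestrict_apply,
          Submodule.subtype_apply]
        exact h.2 x x.2 hx)
  else 0

/-- The differential `d_r : E_r^{p,q} → E_r^{p+r,q-r+1}` of the spectral sequence,
induced by `D`. -/
noncomputable def dpage (A : ℤ → Submodule ℝ W) (D : W →ₗ[ℝ] W) (r : ℕ) (p q p' q' : ℤ)
    (hp : p' = p + r) (hq : q' = q - r + 1) :
    Epage A D r p q →ₗ[ℝ] Epage A D r p' q' := by
  subst hp; subst hq; exact dpageCore A D r p q

end TwistedSetup

section Helpers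

variable {W : Type} [Ring W] [Algebra ℝ W]

theorem mem_psup_iff (A : ℤ → Submodule ℝ W) [DirectSum.Decomposition A] (P : ℤ → Prop) (x : W) :
    x ∈ (⨆ i : ℤ, ⨆ _ : P i, A i) ↔ ∀ i, ¬ P i → (DirectSum.decompose A x i : W) = 0 := by
  classical
  constructor
  · intro hx i hi
    have : (⨆ i : ℤ, ⨆ _ : P i, A i) ≤
        LinearMap.ker (((A i).subtype.comp (DirectSum.component ℝ ℤ (fun i => A i) i)).comp
          (DirectSum.decomposeLinearEquiv A).toLinearMap) := by
      refine iSup_le fun j => iSup_le fun hj => ?_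
      intro y hy
      have hne : j ≠ i := by rintro rfl; exact hi hj
      exact DirectSum.decompose_of_mem_ne A hy hne
    exact this hx
  · intro h
    rw [← DirectSum.sum_support_decompose A x]
    refine Submodule.sum_mem _ fun i _ => ?_
    by_cases hi : P i
    · exact Submodule.mem_iSup_of_mem i (Submodule.mem_iSup_of_mem hi (Subtype.mem _))
    · rw [h i hi]; exact Submodule.zero_mem _

theorem mem_psup_of_mem (A : ℤ → Submodule ℝ W) (P : ℤ → Prop) {i : ℤ} (hi : P i) {x : W}
    (hx : x ∈ A i) : x ∈ (⨆ i : ℤ, ⨆ _ : P i, A i) :=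
  Submodule.mem_iSup_of_mem i (Submodule.mem_iSup_of_mem hi hx)

theorem map_psup (A : ℤ → Submodule ℝ W) (P : ℤ → Prop) (f : W →ₗ[ℝ] W) (S : Submodule ℝ W)
    (h : ∀ i, P i → ∀ x ∈ A i, f x ∈ S) {x : W} (hx : x ∈ (⨆ i : ℤ, ⨆ _ : P i, A i)) :
    f x ∈ S := by
  have : (⨆ i : ℤ, ⨆ _ : P i, A i) ≤ S.comap f :=
    iSup_le fun i => iSup_le fun hi => fun y hy => h i hi y hy
  exact this hx

theorem Kfil_anti (A : ℤ → Submodule ℝ W) {a b : ℤ} (h : a ≤ b) : Kfil A b ≤ Kfil A a :=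
  iSup_le fun _ => iSup_le fun hi => fun _ hy => mem_psup_of_mem A _ (le_trans h hi) hy

theorem Kfil_step (A : ℤ → Submodule ℝ W) [DirectSum.Decomposition A] {p m : ℤ}
    (h : p % 2 ≠ m % 2) {x : W} (hK : x ∈ Kfil A p) (hP : x ∈ ParPart A m) :
    x ∈ Kfil A (p + 1) := by
  unfold Kfil ParPart at *
  rw [mem_psup_iff] at *
  intro i hi
  by_cases hp : p ≤ i
  · have : i = p := by omega
    subst this
    exact hP _ h
  · exact hK i hp

theorem ParPart_congr (A : ℤ → Submodule ℝ W) {a b : ℤ} (h : a % 2 = b % 2) :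
    ParPart A a = ParPart A b := by
  unfold ParPart; rw [h]

theorem mem_Zcyc (A : ℤ → Submodule ℝ W) (D : W →ₗ[ℝ] W) (r : ℕ) (p q : ℤ) (x : W) :
    x ∈ Zcyc A D r p q ↔ x ∈ Kfil A p ∧ x ∈ ParPart A (p + q) ∧ D x ∈ Kfil A (p + r) := by
  simp [Zcyc, Submodule.mem_inf, and_assoc]

theorem dpage_cls (A : ℤ → Submodule ℝ W) (D : W →ₗ[ℝ] W) (r : ℕ) (p q p' q' : ℤ)
    (hp : p' = p + r) (hq : q' = q - r + 1)
    (h1 : ∀ x ∈ Zcyc A D r p q, D x ∈ Zcyc A D r p' q')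
    (h2 : ∀ x ∈ Zcyc A D r p q, x ∈ Bbd A D r p q → D x ∈ Bbd A D r p' q')
    (x : W) (hx : x ∈ Zcyc A D r p q) :
    dpage A D r p q p' q' hp hq (pageCls A D r p q x hx)
      = pageCls A D r p' q' (D x) (h1 x hx) := by
  subst hp; subst hq
  simp only [dpage, dpageCore]
  rw [dif_pos ⟨h1, h2⟩]
  rfl

theorem quot_equiv_of_eq (Z Z' B B' : Submodule ℝ W) (hZ : Z = Z') (hB : B = B') :
    Nonempty ((↥Z ⧸ B.comap Z.subtype) ≃ₗ[ℝ] (↥Z' ⧸ B'.comap Z'.subtype)) := by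
  subst hZ; subst hB; exact ⟨LinearEquiv.refl _ _⟩

theorem quot_equiv_of_le (Z Z' B B' : Submodule ℝ W) (hZ : Z ≤ B) (hB : Z' ≤ B') :
    Nonempty ((↥Z ⧸ B.comap Z.subtype) ≃ₗ[ℝ] (↥Z' ⧸ B'.comap Z'.subtype)) := by
  have e1 : Subsingleton (↥Z ⧸ B.comap Z.subtype) := by
    rw [Submodule.Quotient.subsingleton_iff, Submodule.comap_subtype_eq_top]; exact hZ
  have e2 : Subsingleton (↥Z' ⧸ B'.comap Z'.subtype) := by
    rw [Submodule.Quotient.subsingleton_iff, Submodule.comap_subtype_eq_top]; exact hB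
  exact ⟨LinearEquiv.ofLinearMap 0 0 (LinearMap.ext fun _ => Subsingleton.elim _ _)
    (LinearMap.ext fun _ => Subsingleton.elim _ _)⟩

end Helpers

/-- In the spectral sequence of the filtration `K_p = ⊕_{i ≥ p} Ω^i(M)` of
`(Ω^*(M), D)`: `E_3^{p,q} = E_2^{p,q}`, and for any class `[x_p]_3 ∈ E_3^{p,q}` represented by
a closed `p`-form `x_p`, the third differential is cup product with `H_3`:
`d_3 [x_p] = [H_3 ∧ x_p]`. -/
theorem E3_page_and_third_differential {W : Type} [Ring W] [Algebra ℝ W]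
    (n : ℕ) (A : ℤ → Submodule ℝ W) [DirectSum.Decomposition A]
    (hbound : ∀ i : ℤ, i < 0 ∨ (n : ℤ) < i → A i = ⊥)
    (hmul : ∀ (i j : ℤ) (x y : W), x ∈ A i → y ∈ A j → x * y ∈ A (i + j))
    (d : W →ₗ[ℝ] W)
    (hdmem : ∀ i : ℤ, ∀ x ∈ A i, d x ∈ A (i + 1))
    (hd2 : ∀ x : W, d (d x) = 0)
    (hleib : ∀ (i : ℤ) (x y : W), x ∈ A i →
      d (x * y) = d x * y + ((-1 : ℝ) ^ i) • (x * d y))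
    (hgcomm : ∀ (i j : ℤ) (x y : W), x ∈ A i → y ∈ A j →
      x * y = ((-1 : ℝ) ^ (i * j)) • (y * x))
    (Hc : ℕ → W)
    (hHmem : ∀ i : ℕ, Hc i ∈ A (2 * (i : ℤ) + 1))
    (hHcl : ∀ i : ℕ, d (Hc i) = 0)
    (H : W) (hHdef : H = ∑ i ∈ Finset.Icc 1 ((n - 1) / 2), Hc i)
    (D : W →ₗ[ℝ] W) (hD : ∀ w : W, D w = d w + H * w)
    :
    ∀ p q : ℤ,
      Nonempty (Epage A D 3 p q ≃ₗ[ℝ] Epage A D 2 p q) ∧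
      ∀ (x : W), x ∈ A p → d x = 0 →
        ∀ (hx : x ∈ Zcyc A D 3 p q) (hy : Hc 1 * x ∈ Zcyc A D 3 (p + 3) (q - 2)),
          dpage A D 3 p q (p + 3) (q - 2) (by push_cast; ring) (by push_cast; ring)
              (pageCls A D 3 p q x hx)
            = pageCls A D 3 (p + 3) (q - 2) (Hc 1 * x) hy := by
  have hHx : ∀ (S : Submodule ℝ W) (s : Finset ℕ) (x : W), (∀ j ∈ s, Hc j * x ∈ S) →
      (∑ i ∈ s, Hc i) * x ∈ S := by
    intro S s x h
    rw [Finset.sum_mul]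
    exact Submodule.sum_mem _ h
  have hHA : ∀ (j : ℕ) (i : ℤ) (x : W), x ∈ A i → Hc j * x ∈ A (2 * (j : ℤ) + 1 + i) :=
    fun j i x hx => hmul _ _ _ _ (hHmem j) hx
  have hDK : ∀ (p : ℤ) (x : W), x ∈ Kfil A p → D x ∈ Kfil A (p + 1) := by
    intro p x hx
    refine map_psup A _ D _ ?_ hx
    intro i hi y hy
    rw [hD, hHdef]
    refine Submodule.add_mem _ (mem_psup_of_mem A _ (by omega) (hdmem i y hy)) ?_
    exact hHx _ _ _ fun j _ => mem_psup_of_mem A _ (by omega) (hHA j i y hy)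
  have hDP : ∀ (m : ℤ) (x : W), x ∈ ParPart A m → D x ∈ ParPart A (m + 1) := by
    intro p x hx
    refine map_psup A _ D _ ?_ hx
    intro i hi y hy
    rw [hD, hHdef]
    refine Submodule.add_mem _ (mem_psup_of_mem A _ (by omega) (hdmem i y hy)) ?_
    exact hHx _ _ _ fun j _ => mem_psup_of_mem A _ (by omega) (hHA j i y hy)
  have hodd : ∀ k : ℤ, ((-1 : ℝ) ^ (2 * k + 1)) = -1 := fun k =>
    Odd.neg_one_zpow ⟨k, rfl⟩
  have hanti : ∀ i j : ℕ, Hc i * Hc j = - (Hc j * Hc i) := by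
    intro i j
    have h := hgcomm _ _ _ _ (hHmem i) (hHmem j)
    have e : (2 * (i : ℤ) + 1) * (2 * (j : ℤ) + 1) = 2 * (2 * i * j + i + j) + 1 := by ring
    rw [e, hodd] at h
    simpa using h
  have hHH : H * H = 0 := by
    have h : H * H = - (H * H) := by
      rw [hHdef, Finset.sum_mul_sum]
      conv_lhs => rw [Finset.sum_comm]
      rw [← Finset.sum_neg_distrib]
      refine Finset.sum_congr rfl fun i _ => ?_
      rw [← Finset.sum_neg_distrib]
      exact Finset.sum_congr rfl fun j _ => hanti _ _
    have h2 : (2 : ℝ) • (H * H) = 0 := by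
      rw [two_smul]; nth_rewrite 1 [h]; exact neg_add_cancel _
    exact (smul_eq_zero.mp h2).resolve_left two_ne_zero
  have hdH : ∀ w, d (H * w) = - (H * d w) := by
    intro w
    rw [hHdef, Finset.sum_mul, map_sum, Finset.sum_mul, ← Finset.sum_neg_distrib]
    refine Finset.sum_congr rfl fun i _ => ?_
    rw [hleib _ _ _ (hHmem i), hHcl, hodd]
    simp
  have hDD : ∀ w, D (D w) = 0 := by
    intro w
    rw [hD (D w), hD w, map_add, hd2, hdH, mul_add, ← mul_assoc, hHH]
    simp
  intro p q
  constructor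
  · rcases Int.emod_two_eq_zero_or_one q with hq | hq
    · apply quot_equiv_of_eq
      · ext x
        rw [mem_Zcyc, mem_Zcyc]
        push_cast
        constructor
        · rintro ⟨a, b, c⟩
          exact ⟨a, b, Kfil_anti A (by omega) c⟩
        · rintro ⟨a, b, c⟩
          have := Kfil_step A (m := p + q + 1) (by omega) c (hDP _ _ b)
          exact ⟨a, b, Kfil_anti A (by omega) this⟩
      · unfold Bbd
        congr 1
        · ext x
          rw [mem_Zcyc, mem_Zcyc]
          push_cast
          constructor
          · rintro ⟨a, b, c⟩
            exact ⟨a, b, Kfil_anti A (by omega) c⟩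
          · rintro ⟨a, b, c⟩
            have := hDK _ _ (Kfil_step A (by omega) a b)
            exact ⟨a, b, Kfil_anti A (by omega) this⟩
        · congr 1
          ext x
          rw [mem_Zcyc, mem_Zcyc]
          push_cast
          rw [ParPart_congr A (a := p - 3 + 1 + (q + 3 - 2)) (b := p - 2 + 1 + (q + 2 - 2))
            (by omega)]
          constructor
          · rintro ⟨a, b, c⟩
            have := Kfil_step A (by omega) a b
            exact ⟨Kfil_anti A (by omega) this, b, Kfil_anti A (by omega) c⟩
          · rintro ⟨a, b, c⟩
            exact ⟨Kfil_anti A (by omega) a, b, Kfil_anti A (by omega) c⟩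
    · apply quot_equiv_of_le
      all_goals
        refine le_trans ?_ le_sup_left
        intro x hx
        rw [mem_Zcyc] at *
        obtain ⟨a, b, c⟩ := hx
        refine ⟨Kfil_step A (by omega) a b, ?_, Kfil_anti A (by omega) c⟩
        rw [ParPart_congr A (b := p + q) (by omega)]
        exact b
  · intro x hxA hdx hx hy
    have h1 : ∀ x ∈ Zcyc A D 3 p q, D x ∈ Zcyc A D 3 (p + 3) (q - 2) := by
      intro x hx
      rw [mem_Zcyc] at *
      obtain ⟨a, b, c⟩ := hx
      refine ⟨c, ?_, ?_⟩
      · rw [ParPart_congr A (b := p + q + 1) (by omega)]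
        exact hDP _ _ b
      · rw [hDD]; exact Submodule.zero_mem _
    have h2 : ∀ x ∈ Zcyc A D 3 p q, x ∈ Bbd A D 3 p q → D x ∈ Bbd A D 3 (p + 3) (q - 2) := by
      intro x _ hx
      obtain ⟨y, hy, z, hz, rfl⟩ := Submodule.mem_sup.mp hx
      obtain ⟨w, hw, rfl⟩ := hz
      rw [map_add, hDD, add_zero]
      refine Submodule.mem_sup_right ⟨y, ?_, rfl⟩
      have e1 : p + 3 - ((3 : ℕ) : ℤ) + 1 = p + 1 := by push_cast; ring
      have e2 : q - 2 + ((3 : ℕ) : ℤ) - 2 = q - 1 := by push_cast; ring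
      rw [e1, e2]
      exact hy
    rw [dpage_cls A D 3 p q _ _ _ _ h1 h2]
    unfold pageCls
    rw [Submodule.Quotient.eq]
    change D x - Hc 1 * x ∈ Bbd A D 3 (p + 3) (q - 2)
    refine Submodule.mem_sup_left ?_
    have hP : D x - Hc 1 * x ∈ ParPart A (p + 3 + (q - 2)) :=
      Submodule.sub_mem _ ((mem_Zcyc _ _ _ _ _ _).mp (h1 x hx)).2.1
        ((mem_Zcyc _ _ _ _ _ _).mp hy).2.1
    have hK : D x - Hc 1 * x ∈ Kfil A (p + 5) := by
      rw [hD, hdx, zero_add, hHdef]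
      by_cases hn : 1 ∈ Finset.Icc 1 ((n - 1) / 2)
      · rw [← Finset.add_sum_erase _ _ hn, add_mul, add_sub_cancel_left]
        refine hHx _ _ _ fun j hj => mem_psup_of_mem A _ ?_ (hHA j p x hxA)
        rw [Finset.mem_erase, Finset.mem_Icc] at hj
        omega
      · have h0 : Hc 1 = 0 := by
          have h := hHmem 1
          rw [hbound _ (Or.inr (by rw [Finset.mem_Icc] at hn; push_cast; omega))] at h
          simpa using h
        have hs : Finset.Icc 1 ((n - 1) / 2) = ∅ := by
          rw [Finset.mem_Icc] at hn
          apply Finset.Icc_eq_empty; omega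
        rw [hs, h0]
        simp
    rw [mem_Zcyc]
    refine ⟨Kfil_anti A (by omega) hK, ?_, Kfil_anti A (by push_cast; omega) (hDK _ _ hK)⟩
    rw [ParPart_congr A (b := p + 3 + (q - 2)) (by omega)]
    exact hP
end

section
/- Let H = H_{2s+1} only (s ≥ 1, all other H_{2i+1} = 0) and let [x_p]_{2t+3} ∈ E_{2t+3}^{p,q} with t ≥ 1. Then there exist forms x_{p+2is} = x_{p+2is}^{([t/s])} for 1 ≤ i ≤ [t/s], with x_{p+2(i−1)s+2j} = 0 for 1 ≤ j ≤ s−1 and x_{p+2[t/s]s+2k} = 0 for 1 ≤ k ≤ t−[t/s]s, such that the homogeneous components y_{p+2u+1} of Dx vanish for 0 ≤ u ≤ t, and d_{2t+3}[x_p]_{2t+3} equals [H_{2s+1} ∧ x_p]_{2s+1} if t = s−1, equals [H_{2s+1} ∧ x_{p+2(l−1)s}^{(l−1)}]_{2t+3} if t = ls−1 with l ≥ 2, and equals 0 otherwise. -/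
section TwistedLemmas

variable {W : Type} [Ring W] [Algebra ℝ W]

lemma tw_mem_sup (A : ℤ → Submodule ℝ W) (P : ℤ → Prop) (i : ℤ) (h : P i) (w : W)
    (hw : w ∈ A i) : w ∈ ⨆ i : ℤ, ⨆ _ : P i, A i :=
  Submodule.mem_iSup_of_mem i (Submodule.mem_iSup_of_mem h hw)

lemma tw_map_sup (A : ℤ → Submodule ℝ W) (P Q : ℤ → Prop) (f : W →ₗ[ℝ] W) (k : ℤ)
    (hf : ∀ i, ∀ w ∈ A i, f w ∈ A (i + k)) (hPQ : ∀ i, P i → Q (i + k))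
    (w : W) (hw : w ∈ ⨆ i : ℤ, ⨆ _ : P i, A i) : f w ∈ ⨆ i : ℤ, ⨆ _ : Q i, A i := by
  have : (⨆ i : ℤ, ⨆ _ : P i, A i) ≤ (⨆ i : ℤ, ⨆ _ : Q i, A i).comap f := by
    refine iSup_le fun i => iSup_le fun h => ?_
    intro v hv
    exact tw_mem_sup A Q (i + k) (hPQ i h) _ (hf i v hv)
  exact this hw

/-- Homogeneous component. -/
noncomputable def twProj (A : ℤ → Submodule ℝ W) [DirectSum.Decomposition A] (i : ℤ) :
    W →ₗ[ℝ] W :=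
  (A i).subtype ∘ₗ (DirectSum.component ℝ ℤ (fun i => A i) i) ∘ₗ
    (DirectSum.decomposeLinearEquiv A).toLinearMap

lemma twProj_apply (A : ℤ → Submodule ℝ W) [DirectSum.Decomposition A] (i : ℤ) (w : W) :
    twProj A i w = (DirectSum.decompose A w i : W) := rfl

lemma twProj_mem (A : ℤ → Submodule ℝ W) [DirectSum.Decomposition A] (i : ℤ) (w : W) :
    twProj A i w ∈ A i := by
  rw [twProj_apply]; exact Subtype.mem _

lemma twProj_same (A : ℤ → Submodule ℝ W) [DirectSum.Decomposition A] (i : ℤ) (w : W)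
    (hw : w ∈ A i) : twProj A i w = w := by
  rw [twProj_apply]; exact DirectSum.decompose_of_mem_same A hw

lemma twProj_ne (A : ℤ → Submodule ℝ W) [DirectSum.Decomposition A] (i j : ℤ) (w : W)
    (hw : w ∈ A i) (h : i ≠ j) : twProj A j w = 0 := by
  rw [twProj_apply]; exact DirectSum.decompose_of_mem_ne A hw h

lemma twProj_sup (A : ℤ → Submodule ℝ W) [DirectSum.Decomposition A] (P : ℤ → Prop) (j : ℤ)
    (hj : ¬ P j) (w : W) (hw : w ∈ ⨆ i : ℤ, ⨆ _ : P i, A i) : twProj A j w = 0 := by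
  have : (⨆ i : ℤ, ⨆ _ : P i, A i) ≤ LinearMap.ker (twProj A j) := by
    refine iSup_le fun i => iSup_le fun h => ?_
    intro v hv
    exact twProj_ne A i j v hv (fun e => hj (e ▸ h))
  exact this hw

lemma twProj_comm (A : ℤ → Submodule ℝ W) [DirectSum.Decomposition A] (f : W →ₗ[ℝ] W) (k : ℤ)
    (hf : ∀ i, ∀ w ∈ A i, f w ∈ A (i + k)) (i : ℤ) (w : W) :
    twProj A (i + k) (f w) = f (twProj A i w) := by
  induction w using DirectSum.Decomposition.inductionOn A with
  | zero => simp
  | @homogeneous j m =>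
    by_cases h : j = i
    · subst h
      rw [twProj_same A _ _ m.2, twProj_same A _ _ (hf _ _ m.2)]
    · rw [twProj_ne A j i _ m.2 h, twProj_ne A (j + k) (i + k) _ (hf _ _ m.2) (by omega), map_zero]
  | add a b ha hb => simp only [map_add, ha, hb]

lemma tw_dpage (A : ℤ → Submodule ℝ W) (D : W →ₗ[ℝ] W) (hDD : ∀ w, D (D w) = 0)
    (hpar : ∀ m w, w ∈ ParPart A m → D w ∈ ParPart A (m + 1))
    (r : ℕ) (p q p' q' : ℤ)
    (hp : p' = p + r) (hq : q' = q - r + 1) (z : W) (hz : z ∈ Zcyc A D r p q) :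
    ∃ hw : D z ∈ Zcyc A D r p' q',
      dpage A D r p q p' q' hp hq (pageCls A D r p q z hz) = pageCls A D r p' q' (D z) hw := by
  subst hp; subst hq
  have h1 : ∀ x ∈ Zcyc A D r p q, D x ∈ Zcyc A D r (p + r) (q - r + 1) := by
    intro x hx
    refine ⟨⟨hx.2, ?_⟩, ?_⟩
    · have := hpar _ _ hx.1.2
      rwa [show p + q + 1 = p + (r:ℤ) + (q - r + 1) by ring] at this
    · refine Submodule.mem_comap.2 ?_
      rw [hDD]; exact zero_mem _
  have h2 : ∀ x ∈ Zcyc A D r p q, x ∈ Bbd A D r p q → D x ∈ Bbd A D r (p + r) (q - r + 1) := by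
    intro x _ hx
    obtain ⟨a, ha, b, ⟨c, hc, rfl⟩, rfl⟩ := Submodule.mem_sup.1 hx
    rw [map_add, hDD, add_zero]
    refine Submodule.mem_sup_right ⟨a, ?_, rfl⟩
    rw [show p + (r:ℤ) - r + 1 = p + 1 by ring, show q - (r:ℤ) + 1 + r - 2 = q - 1 by ring]
    exact ha
  refine ⟨h1 z hz, ?_⟩
  show dpageCore A D r p q _ = _
  unfold dpageCore
  rw [dif_pos ⟨h1, h2⟩]
  rfl

end TwistedLemmas

/-- Theorem 4.2 of the paper. For `H = H_{2s+1}` only (`s ≥ 1`) and a class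
`[x_p]_{2t+3} ∈ E_{2t+3}^{p,q}` (`t ≥ 1`) represented by the closed `p`-form `x`, there exist
forms `xs i ∈ Ω^{p+2i}(M)` (`1 ≤ i ≤ t`), vanishing except when `s ∣ i` (this encodes
`x_{p+2(i-1)s+2j} = 0` and `x_{p+2[t/s]s+2k} = 0`), such that the homogeneous components
`y_{p+2u+1}` of `D z` vanish for `0 ≤ u ≤ t` where `z = x + ∑_{i=1}^t xs i`, and
`d_{2t+3}[x_p]_{2t+3}` equals `[H_{2s+1} ∧ x_p]_{2s+1}` if `t = s - 1`, equals
`[H_{2s+1} ∧ x_{p+2(l-1)s}]_{2t+3}` if `t = l s - 1` with `l ≥ 2`, and equals `0`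
otherwise. -/
theorem cup_product_differentials_single_twist {W : Type} [Ring W] [Algebra ℝ W]
    (n : ℕ) (A : ℤ → Submodule ℝ W) [DirectSum.Decomposition A]
    (hbound : ∀ i : ℤ, i < 0 ∨ (n : ℤ) < i → A i = ⊥)
    (hmul : ∀ (i j : ℤ) (x y : W), x ∈ A i → y ∈ A j → x * y ∈ A (i + j))
    (d : W →ₗ[ℝ] W)
    (hdmem : ∀ i : ℤ, ∀ x ∈ A i, d x ∈ A (i + 1))
    (hd2 : ∀ x : W, d (d x) = 0)
    (hleib : ∀ (i : ℤ) (x y : W), x ∈ A i →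
      d (x * y) = d x * y + ((-1 : ℝ) ^ i) • (x * d y))
    (hgcomm : ∀ (i j : ℤ) (x y : W), x ∈ A i → y ∈ A j →
      x * y = ((-1 : ℝ) ^ (i * j)) • (y * x))
    (s : ℕ) (hs : 1 ≤ s) (Hs : W)
    (hHsmem : Hs ∈ A (2 * (s : ℤ) + 1)) (hHscl : d Hs = 0)
    (D : W →ₗ[ℝ] W) (hD : ∀ w : W, D w = d w + Hs * w)
    (t : ℕ) (ht : 1 ≤ t) (p q : ℤ) (hq : q % 2 = 0)
    (x : W) (hxp : x ∈ A p) (hxd : d x = 0)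
    (hsurv : ∃ z ∈ Zcyc A D (2 * t + 3) p q, z - x ∈ Kfil A (p + 1)) :
    ∃ xs : ℕ → W, xs 0 = x ∧
      (∀ i : ℕ, 1 ≤ i → i ≤ t → xs i ∈ A (p + 2 * i)) ∧
      (∀ i : ℕ, 1 ≤ i → i ≤ t → ¬ s ∣ i → xs i = 0) ∧
      (∀ j : ℕ, 1 ≤ j → j ≤ t → s ≤ j → d (xs j) + Hs * xs (j - s) = 0) ∧
      (∀ j : ℕ, 1 ≤ j → j ≤ t → j < s → d (xs j) = 0) ∧
      ∃ hz : x + ∑ i ∈ Finset.Icc 1 t, xs i ∈ Zcyc A D (2 * t + 3) p q,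
        (t + 1 = s →
          ∃ hw : Hs * x ∈ Zcyc A D (2 * t + 3) (p + 2 * t + 3) (q - 2 * t - 2),
            dpage A D (2 * t + 3) p q (p + 2 * t + 3) (q - 2 * t - 2)
                (by push_cast; ring) (by push_cast; ring)
                (pageCls A D (2 * t + 3) p q (x + ∑ i ∈ Finset.Icc 1 t, xs i) hz)
              = pageCls A D (2 * t + 3) (p + 2 * t + 3) (q - 2 * t - 2) (Hs * x) hw) ∧
        (∀ l : ℕ, 2 ≤ l → t + 1 = l * s →
          ∃ hw : Hs * xs ((l - 1) * s)
              ∈ Zcyc A D (2 * t + 3) (p + 2 * t + 3) (q - 2 * t - 2),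
            dpage A D (2 * t + 3) p q (p + 2 * t + 3) (q - 2 * t - 2)
                (by push_cast; ring) (by push_cast; ring)
                (pageCls A D (2 * t + 3) p q (x + ∑ i ∈ Finset.Icc 1 t, xs i) hz)
              = pageCls A D (2 * t + 3) (p + 2 * t + 3) (q - 2 * t - 2)
                  (Hs * xs ((l - 1) * s)) hw) ∧
        ((∀ l : ℕ, 1 ≤ l → t + 1 ≠ l * s) →
          dpage A D (2 * t + 3) p q (p + 2 * t + 3) (q - 2 * t - 2)
              (by push_cast; ring) (by push_cast; ring)
              (pageCls A D (2 * t + 3) p q (x + ∑ i ∈ Finset.Icc 1 t, xs i) hz) = 0) := by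
  have hHH : Hs * Hs = 0 := by
    have h := hgcomm _ _ Hs Hs hHsmem hHsmem
    rw [Odd.neg_one_zpow (by
      have : Odd (2 * (s : ℤ) + 1) := ⟨s, rfl⟩
      exact this.mul this), neg_one_smul] at h
    have h2 : (2 : ℝ) • (Hs * Hs) = 0 := by
      rw [two_smul]; nth_rewrite 1 [h]; simp
    exact (smul_eq_zero.1 h2).resolve_left (by norm_num)
  have hdH : ∀ w, d (Hs * w) = - (Hs * d w) := by
    intro w
    rw [hleib _ Hs w hHsmem, hHscl, zero_mul, zero_add,
      Odd.neg_one_zpow ⟨(s : ℤ), rfl⟩, neg_one_smul]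
  have hDD : ∀ w, D (D w) = 0 := by
    intro w
    rw [hD, hD, map_add, hd2, hdH, mul_add, ← mul_assoc Hs Hs, hHH]
    simp
  let mH : W →ₗ[ℝ] W := LinearMap.mulLeft ℝ Hs
  have hmH : ∀ i, ∀ w ∈ A i, mH w ∈ A (i + (2 * (s : ℤ) + 1)) := by
    intro i w hw
    rw [add_comm]
    exact hmul _ _ _ _ hHsmem hw
  have hpar : ∀ m w, w ∈ ParPart A m → D w ∈ ParPart A (m + 1) := by
    intro m w hw
    rw [hD]
    refine add_mem ?_ ?_
    · exact tw_map_sup A _ _ d 1 hdmem (by intro i hi; omega) w hw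
    · exact tw_map_sup A _ _ mH _ hmH (by intro i hi; omega) w hw
  obtain ⟨z, hzZ, hzx⟩ := hsurv
  have hz0 : twProj A p z = x := by
    have h := twProj_sup A (fun i => p + 1 ≤ i) p (by omega) _ hzx
    rw [map_sub, twProj_same A p x hxp] at h
    exact sub_eq_zero.1 h
  have hzc : ∀ j : ℕ, s ≤ j → j ≤ t →
      d (twProj A (p + 2 * (j : ℤ)) z) + Hs * twProj A (p + 2 * ((j - s : ℕ) : ℤ)) z = 0 := by
    intro j hj hjt
    have h := twProj_sup A (fun i => p + ((2 * t + 3 : ℕ) : ℤ) ≤ i) (p + 2 * (j : ℤ) + 1)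
      (by push_cast; omega) _ hzZ.2
    rw [hD, map_add, twProj_comm A d 1 hdmem] at h
    have h2 := twProj_comm A mH _ hmH (p + 2 * ((j - s : ℕ) : ℤ)) z
    rw [show p + 2 * ((j - s : ℕ) : ℤ) + (2 * (s : ℤ) + 1) = p + 2 * (j : ℤ) + 1 by
      push_cast [hj]; ring] at h2
    have h3 : twProj A (p + 2 * (j : ℤ) + 1) (Hs * z)
      = Hs * twProj A (p + 2 * ((j - s : ℕ) : ℤ)) z := h2
    rw [h3] at h
    exact h
  obtain ⟨xs, hxs⟩ : ∃ xs : ℕ → W, ∀ i, xs i = if s ∣ i then twProj A (p + 2 * (i : ℤ)) z else 0 :=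
    ⟨_, fun _ => rfl⟩
  have hx0 : xs 0 = x := by rw [hxs]; simp [hz0]
  have hxA : ∀ i : ℕ, xs i ∈ A (p + 2 * (i : ℤ)) := by
    intro i
    rw [hxs]
    split_ifs
    · exact twProj_mem _ _ _
    · exact zero_mem _
  have hxn : ∀ i, ¬ s ∣ i → xs i = 0 := fun i h => by rw [hxs, if_neg h]
  have hxr : ∀ j, s ≤ j → j ≤ t → d (xs j) + Hs * xs (j - s) = 0 := by
    intro j hj hjt
    by_cases h : s ∣ j
    · have h' : s ∣ j - s := Nat.dvd_sub h dvd_rfl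
      rw [hxs, hxs, if_pos h, if_pos h']
      exact hzc j hj hjt
    · have h' : ¬ s ∣ j - s := fun h' => h (by
        have := dvd_add h' (dvd_refl s)
        rwa [Nat.sub_add_cancel hj] at this)
      rw [hxn _ h, hxn _ h']; simp
  have hxl : ∀ j, j < s → d (xs j) = 0 := by
    intro j hj
    rcases Nat.eq_zero_or_pos j with rfl | h0
    · rw [hx0, hxd]
    · rw [hxn j (fun h => absurd (Nat.le_of_dvd h0 h) (by omega)), map_zero]
  have hsum : x + ∑ i ∈ Finset.Icc 1 t, xs i = ∑ i ∈ Finset.range (t + 1), xs i := by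
    rw [Finset.sum_range_succ', hx0, add_comm, ← Finset.Ico_add_one_right_eq_Icc, Finset.sum_Ico_eq_sum_range]
    simp [add_comm]
  have hDpart : ∀ m, m ≤ t + 1 → D (∑ i ∈ Finset.range m, xs i)
      = ∑ i ∈ Finset.Ico (m - s) m, Hs * xs i := by
    intro m
    induction m with
    | zero => intro _; simp
    | succ m ih =>
      intro hm
      rw [Finset.sum_range_succ, map_add, ih (by omega), hD]
      by_cases h : s ≤ m
      · have h1 := hxr m h (by omega)
        rw [Finset.sum_eq_sum_Ico_succ_bot (show m - s < m by omega),
          show m + 1 - s = m - s + 1 by omega,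
          Finset.sum_Ico_succ_top (show m - s + 1 ≤ m by omega),
          eq_neg_of_add_eq_zero_left h1]
        abel
      · rw [hxl m (by omega), show m + 1 - s = 0 by omega, show m - s = 0 by omega,
          Finset.sum_Ico_succ_top (Nat.zero_le m), zero_add]
  have hDz := hDpart (t + 1) le_rfl
  rw [← hsum] at hDz
  have hHx : ∀ i : ℕ, Hs * xs i ∈ A (p + 2 * (i : ℤ) + (2 * (s : ℤ) + 1)) := fun i =>
    hmH _ _ (hxA i)
  have hz : x + ∑ i ∈ Finset.Icc 1 t, xs i ∈ Zcyc A D (2 * t + 3) p q := by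
    refine ⟨⟨?_, ?_⟩, ?_⟩
    · rw [hsum]
      exact sum_mem fun i _ => tw_mem_sup A _ (p + 2 * (i : ℤ)) (by omega) _ (hxA i)
    · rw [hsum]
      exact sum_mem fun i _ => tw_mem_sup A _ (p + 2 * (i : ℤ)) (by omega) _ (hxA i)
    · refine Submodule.mem_comap.2 ?_
      rw [hDz]
      refine sum_mem fun i hi => tw_mem_sup A _ _ ?_ _ (hHx i)
      rw [Finset.mem_Ico] at hi
      push_cast
      omega
  have hmain : ∀ l : ℕ, 1 ≤ l → t + 1 = l * s →
      D (x + ∑ i ∈ Finset.Icc 1 t, xs i) = Hs * xs ((l - 1) * s) := by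
    intro l hl hls
    obtain ⟨k, rfl⟩ : ∃ k, l = k + 1 := ⟨l - 1, by omega⟩
    rw [add_mul, one_mul] at hls
    rw [hDz, hls, Nat.add_sub_cancel, Nat.add_sub_cancel]
    refine Finset.sum_eq_single_of_mem (k * s) (by rw [Finset.mem_Ico]; omega) ?_
    intro b hb hne
    rw [Finset.mem_Ico] at hb
    rw [hxn b ?_, mul_zero]
    intro hdv
    have h1 : s ∣ b - k * s := Nat.dvd_sub hdv (Dvd.intro_left k rfl)
    have := Nat.le_of_dvd (by omega) h1
    omega
  have hfin := tw_dpage A D hDD hpar (2 * t + 3) p q (p + 2 * t + 3) (q - 2 * t - 2)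
    (by push_cast; ring) (by push_cast; ring) _ hz
  refine ⟨xs, hx0, fun i _ _ => hxA i, fun i _ _ h => hxn i h, fun j _ h1 h2 => hxr j h2 h1,
    fun j _ _ h => hxl j h, hz, ?_, ?_, ?_⟩
  · intro hts
    have h := hmain 1 le_rfl (by omega)
    simp only [Nat.sub_self, zero_mul, hx0] at h
    obtain ⟨hw, he⟩ := hfin
    refine ⟨h ▸ hw, he.trans ?_⟩
    congr 1
  · intro l hl hls
    have h := hmain l (by omega) hls
    obtain ⟨hw, he⟩ := hfin
    refine ⟨h ▸ hw, he.trans ?_⟩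
    congr 1
  · intro hno
    obtain ⟨hw, he⟩ := hfin
    rw [he]
    refine (Submodule.Quotient.mk_eq_zero _).2 ?_
    show D _ ∈ Bbd A D _ _ _
    refine Submodule.mem_sup_left ⟨⟨?_, ?_⟩, ?_⟩
    · rw [hDz]
      refine sum_mem fun i hi => ?_
      rw [Finset.mem_Ico] at hi
      by_cases hdv : s ∣ i
      · refine tw_mem_sup A _ _ ?_ _ (hHx i)
        have : t + 1 ≠ i + s := by
          intro h
          obtain ⟨k, rfl⟩ := hdv
          exact hno (k + 1) (by omega) (by rw [h]; ring)
        omega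
      · rw [hxn i hdv, mul_zero]; exact zero_mem _
    · have := hw.1.2
      rwa [show p + 2 * (t:ℤ) + 3 + 1 + (q - 2 * t - 2 - 1)
        = p + 2 * (t:ℤ) + 3 + (q - 2 * t - 2) by ring]
    · refine Submodule.mem_comap.2 ?_
      rw [hDD]; exact zero_mem _
end
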